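/- arXiv:math/0512195 — 2 statements merged into one kernel-verified Lean document; each statement's English description precedes it below -/
import Mathlib

section
/- For every finite Borel measure μ on E = [0,∞] and every bounded Borel measurable function h : E → ℝ with h(0) = 0, one has ∫₀^∞ h(H^μ_r) dr = ∫_E h dμ. -/
/-!
The height `Hr μ r` is a generalised inverse of the tail function of `μ`. The support of the
erased measure has supremum exactly the cut point (`Hr_eq_eraseCut`), and by right-continuity of
`s ↦ μ (Iic s)` one has `eraseCut μ r ≤ s ↔ μ (Ioi s) ≤ r` (`eraseCut_le_iff_Ioi`). Hence the
image of Lebesgue measure on `[0, μ univ)` under `r ↦ Hr μ r` gives `Iic s` the mass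
`μ univ - μ (Ioi s) = μ (Iic s)`, so this image is `μ` (`map_eraseCut`). The integral identity
follows by change of variables, since `Hr μ r = 0` for `r ≥ μ univ` and `h 0 = 0`.
-/

open MeasureTheory Set Filter Topology ENNReal

noncomputable section

/-- `mH ν` is the supremum of the closed support of a Borel measure `ν` on `E = [0,∞]`
(a point is in the support iff every open neighbourhood has positive measure),
with the convention `sSup ∅ = 0`. -/
def mH (ν : Measure ℝ≥0∞) : ℝ≥0∞ :=
  sSup {x : ℝ≥0∞ | ∀ U : Set ℝ≥0∞, IsOpen U → x ∈ U → 0 < ν U}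

/-- The point at which the erased measure `k_a ν` is cut. -/
def eraseCut (ν : Measure ℝ≥0∞) (a : ℝ≥0∞) : ℝ≥0∞ :=
  sInf {s : ℝ≥0∞ | ν Set.univ - a ≤ ν (Set.Iic s)}

/-- The erased measure `k_a ν` : the measure `ν` erased by mass `a` backward from the top.
For a finite measure `ν` it is the unique finite measure satisfying
`eraseMass a ν (Set.Iic s) = min (ν (Set.Iic s)) (ν Set.univ - a)` for all `s`;
in particular it is `0` as soon as `a ≥ ν Set.univ`. -/
def eraseMass (a : ℝ≥0∞) (ν : Measure ℝ≥0∞) : Measure ℝ≥0∞ :=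
  ν.restrict (Set.Iio (eraseCut ν a)) +
    (ν Set.univ - a - ν (Set.Iio (eraseCut ν a))) • Measure.dirac (eraseCut ν a)

/-- `Hr ν r = H^ν_r = H^{k_r ν}`, the height of the measure `ν` erased by mass `r`. -/
def Hr (ν : Measure ℝ≥0∞) (r : ℝ≥0∞) : ℝ≥0∞ := mH (eraseMass r ν)

/-- The infimum defining the cut is attained, by right-continuity of `s ↦ μ (Iic s)`. -/
lemma eraseCut_le_iff (μ : Measure ℝ≥0∞) [IsFiniteMeasure μ] (a s : ℝ≥0∞) :
    eraseCut μ a ≤ s ↔ μ Set.univ - a ≤ μ (Set.Iic s) := by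
  refine ⟨fun hs => ?_, fun hs => sInf_le hs⟩
  rcases eq_or_ne s ⊤ with rfl | hst
  · simp
  have hlim : Tendsto (fun t => μ (Set.Iic t)) (𝓝[>] s) (𝓝 (μ (⋂ t > s, Set.Iic t))) :=
    tendsto_measure_biInter_gt (fun t _ => measurableSet_Iic.nullMeasurableSet)
      (fun i j _ hij => Set.Iic_subset_Iic.2 hij)
      ⟨⊤, lt_top_iff_ne_top.2 hst, measure_ne_top _ _⟩
  have hI : (⋂ t > s, Set.Iic t) = Set.Iic s := by
    ext x
    simp only [Set.mem_iInter, Set.mem_Iic]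
    exact ⟨fun hx => le_of_forall_gt_imp_ge_of_dense hx, fun hx t ht => hx.trans ht.le⟩
  rw [hI] at hlim
  have : (𝓝[>] s).NeBot := nhdsGT_neBot_of_exists_gt ⟨⊤, lt_top_iff_ne_top.2 hst⟩
  refine ge_of_tendsto hlim ?_
  filter_upwards [self_mem_nhdsWithin] with t ht
  obtain ⟨u, hu, hut⟩ := sInf_lt_iff.1 (lt_of_le_of_lt hs ht)
  exact le_trans hu (measure_mono (Set.Iic_subset_Iic.2 hut.le))

lemma eraseCut_le_iff_Ioi (μ : Measure ℝ≥0∞) [IsFiniteMeasure μ] (a s : ℝ≥0∞) :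
    eraseCut μ a ≤ s ↔ μ (Set.Ioi s) ≤ a := by
  have hsum : μ (Set.Iic s) + μ (Set.Ioi s) = μ Set.univ := by
    rw [← Set.compl_Iic]
    exact measure_add_measure_compl measurableSet_Iic
  rw [eraseCut_le_iff, tsub_le_iff_right, ← hsum]
  exact ENNReal.add_le_add_iff_left (measure_ne_top _ _)

lemma eraseCut_eq_zero {μ : Measure ℝ≥0∞} {a : ℝ≥0∞} (ha : μ Set.univ ≤ a) :
    eraseCut μ a = 0 :=
  le_antisymm (sInf_le (by simp [tsub_eq_zero_of_le ha])) bot_le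

/-- The supremum of the support of `k_a μ` is the cut point, whether or not `k_a μ` has an atom
there: without an atom, all mass below the cut accumulates at it, by minimality of the cut. -/
lemma Hr_eq_eraseCut (μ : Measure ℝ≥0∞) [IsFiniteMeasure μ] (a : ℝ≥0∞) :
    Hr μ a = eraseCut μ a := by
  refine le_antisymm (sSup_le fun x hx => ?_) ?_
  · by_contra! hlt
    have h1 := hx (Set.Ioi (eraseCut μ a)) isOpen_Ioi hlt
    simp [eraseMass, Measure.restrict_apply measurableSet_Ioi] at h1
    rw [Set.Ioi_inter_Iio, Set.Ioo_self] at h1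
    simp at h1
  rcases eq_or_ne (eraseCut μ a) 0 with h0 | h0
  · simp [h0]
  refine le_sSup fun U hU hcU => ?_
  obtain ⟨l, hl, hlU⟩ := exists_Ioc_subset_of_mem_nhds (hU.mem_nhds hcU) ⟨0, pos_iff_ne_zero.2 h0⟩
  -- By minimality of the cut, `Iic l` does not yet carry the mass `μ univ - a`.
  have hlt : μ (Set.Iic l) < μ Set.univ - a := by
    rw [← not_le, ← eraseCut_le_iff]
    exact not_le.2 hl
  have hdU : Measure.dirac (eraseCut μ a) U = 1 := Measure.dirac_apply_of_mem hcU
  rw [eraseMass, Measure.add_apply, Measure.smul_apply, hdU, smul_eq_mul, mul_one]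
  by_contra hcon
  obtain ⟨h1, h2⟩ := add_eq_zero.1 (nonpos_iff_eq_zero.1 (not_lt.1 hcon))
  rw [Measure.restrict_apply hU.measurableSet] at h1
  have hle : μ Set.univ - a ≤ μ (Set.Iio (eraseCut μ a)) := tsub_eq_zero_iff_le.1 h2
  have hsub : Set.Iio (eraseCut μ a) ⊆ Set.Iic l ∪ (U ∩ Set.Iio (eraseCut μ a)) := by
    intro x hx
    rcases le_or_gt x l with hxl | hxl
    · exact Or.inl hxl
    · exact Or.inr ⟨hlU ⟨hxl, le_of_lt hx⟩, hx⟩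
  have := (measure_mono hsub).trans (measure_union_le (μ := μ) _ _)
  rw [h1, add_zero] at this
  exact absurd (hle.trans this) (not_le.2 hlt)

lemma measurable_eraseCut (μ : Measure ℝ≥0∞) [IsFiniteMeasure μ] :
    Measurable fun r : ℝ => eraseCut μ (ENNReal.ofReal r) := by
  refine Antitone.measurable fun r t hrt => ?_
  rw [eraseCut_le_iff_Ioi]
  exact ((eraseCut_le_iff_Ioi μ _ _).1 le_rfl).trans (ENNReal.ofReal_le_ofReal hrt)

/-- The generalised inverse of the tail function transports Lebesgue measure to `μ`. -/
lemma map_eraseCut (μ : Measure ℝ≥0∞) [IsFiniteMeasure μ] :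
    (volume.restrict (Set.Ico 0 (μ.real Set.univ))).map
      (fun r : ℝ => eraseCut μ (ENNReal.ofReal r)) = μ := by
  symm
  refine Measure.ext_of_Iic _ _ fun s => ?_
  rw [Measure.map_apply (measurable_eraseCut μ) measurableSet_Iic,
    Measure.restrict_apply (measurable_eraseCut μ measurableSet_Iic)]
  have hset : (fun r : ℝ => eraseCut μ (ENNReal.ofReal r)) ⁻¹' Set.Iic s ∩
      Set.Ico 0 (μ.real Set.univ) = Set.Ico (μ.real (Set.Ioi s)) (μ.real Set.univ) := by
    ext r
    simp only [Set.mem_inter_iff, Set.mem_preimage, Set.mem_Iic, Set.mem_Ico, eraseCut_le_iff_Ioi]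
    constructor
    · rintro ⟨h1, h2, h3⟩
      exact ⟨ENNReal.toReal_le_of_le_ofReal h2 h1, h3⟩
    · rintro ⟨h1, h3⟩
      exact ⟨ENNReal.le_ofReal_iff_toReal_le (measure_ne_top _ _)
        (measureReal_nonneg.trans h1) |>.2 h1, measureReal_nonneg.trans h1, h3⟩
  have hsum : μ.real (Set.Iic s) + μ.real (Set.Ioi s) = μ.real Set.univ := by
    rw [← Set.compl_Iic]
    exact measureReal_add_measureReal_compl measurableSet_Iic
  rw [hset, Real.volume_Ico, ← hsum, add_sub_cancel_right, ofReal_measureReal]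

/-- For every finite Borel measure `μ` on `E = [0,∞]` and every bounded Borel
measurable `h : E → ℝ` with `h 0 = 0`, `∫₀^∞ h(H^μ_r) dr = ∫_E h dμ`. -/
theorem integral_height_eq' (μ : Measure ℝ≥0∞) [IsFiniteMeasure μ]
    (h : ℝ≥0∞ → ℝ) (hm : Measurable h) (hb : ∃ C, ∀ x, |h x| ≤ C) (h0 : h 0 = 0) :
    ∫ r in Set.Ioi (0:ℝ), h (Hr μ (ENNReal.ofReal r)) = ∫ x, h x ∂μ := by
  simp only [Hr_eq_eraseCut]
  have hzero : ∀ r ∈ Set.Ici (0:ℝ) \ Set.Ico 0 (μ.real Set.univ),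
      h (eraseCut μ (ENNReal.ofReal r)) = 0 := by
    rintro r ⟨hr0, hr⟩
    have hr' : μ.real Set.univ ≤ r := by
      by_contra! hlt
      exact hr ⟨hr0, hlt⟩
    rw [eraseCut_eq_zero
      ((ENNReal.le_ofReal_iff_toReal_le (measure_ne_top _ _) hr0).2 hr'), h0]
  rw [← integral_Ici_eq_integral_Ioi,
    setIntegral_eq_of_subset_of_forall_sdiff_eq_zero measurableSet_Ici Set.Ico_subset_Ici_self hzero]
  -- Only the measure on the right may be rewritten: the left side also mentions `μ`.
  conv_rhs => rw [← map_eraseCut μ]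
  exact (integral_map (measurable_eraseCut μ).aemeasurable hm.aestronglyMeasurable).symm
end
end

section
/- Let (Ω, 𝒜, P) be a probability space, let I* : Ω → [0,∞) be a random variable whose law has no atoms (P(I* = x) = 0 for all x ≥ 0), and let ρ : Ω → M_f(E) be a random finite Borel measure on E = [0,∞] (measurable for the Borel σ-field of the weak topology on M_f(E)). Let F : M_f(E) → ℝ be bounded, continuous for the weak topology, and such that F(μ_n) → 0 for every sequence (μ_n) with ⟨μ_n,1⟩ → ∞. Then the function 𝓕 : M_f(E) → ℝ defined by 𝓕(μ) = E[F([k_{I*}μ, ρ])] is continuous for the weak topology and satisfies 𝓕(μ_n) → 0 for every sequence (μ_n) with ⟨μ_n,1⟩ → ∞. -/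
/-! The erased measure `k_a μ` and the height `H^{k_a μ}` are both read off the cut point
`c = eraseCut μ a`: the height of `k_a μ` is exactly `c` (`mH_eraseMass`), and
`∫ f d(k_a μ) = ∫ f (x ∧ c) μ(dx) - f(c) (a ∧ μ(E))` (`integral_eraseMass`). Hence
`∫ f d[k_a μ, ν] = ∫ f (x ∧ c) μ(dx) - f(c) (a ∧ μ(E)) + ∫ f (c + x) ν(dx)`, which is jointly
continuous in `(a, c, μ, ν)` because `E` is compact.

The cut point itself is lower semicontinuous in `(a, μ)`, and it is continuous at `(a, μ)` as soon
as `a > 0` is a continuity point of the antitone function `eraseCut μ` (`tendsto_eraseCut`).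
That function has countably many discontinuities, so the atomless variable `I*` almost surely avoids
them, together with `0`. Therefore `F([k_{I*} μ, ρ])` converges almost surely when `μ` does, and
bounded convergence concludes. Bounded convergence along a neighbourhood filter needs `M_f(E)` to be
first countable, which holds because `C(E)` is separable (`firstCountable_finiteMeasure`).
Measurability of the integrand follows from the same almost sure convergence after
approximating `I*` by simple functions. For the vanishing statement, the mass of `[k_a μ, ν]` is at
least `μ(E) - a`. -/

open MeasureTheory Set Filter Topology ENNReal

noncomputable section

/-- The concatenation `[μ, ν]` of two finite measures on `E = [0,∞]` :
`∫ f d[μ,ν] = ∫ f dμ + ∫ f(H^μ + x) ν(dx)`, with the convention `x + ∞ = ∞`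
(automatic for `ℝ≥0∞` addition). -/
def concatM (μ ν : Measure ℝ≥0∞) : Measure ℝ≥0∞ :=
  μ + ν.map (fun x => mH μ + x)

/-! ### Weak convergence on the compact space `[0,∞]` -/

lemma integrable_of_continuousMap (μ : FiniteMeasure ℝ≥0∞) (f : C(ℝ≥0∞, ℝ)) :
    Integrable f (μ : Measure ℝ≥0∞) :=
  (BoundedContinuousFunction.mkOfCompact f).integrable (μ : Measure ℝ≥0∞)

lemma abs_integral_sub_le (μ : FiniteMeasure ℝ≥0∞) (f g : C(ℝ≥0∞, ℝ)) :
    |∫ x, f x ∂(μ : Measure ℝ≥0∞) - ∫ x, g x ∂(μ : Measure ℝ≥0∞)| ≤ ‖f - g‖ * (μ.mass : ℝ) := by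
  rw [← integral_sub (integrable_of_continuousMap μ f) (integrable_of_continuousMap μ g)]
  exact norm_integral_le_of_norm_le_const (Eventually.of_forall fun x => (f - g).norm_coe_le_norm x)

lemma tendsto_integral_continuousMap {ι : Type*} {L : Filter ι} {μs : ι → FiniteMeasure ℝ≥0∞}
    {μ : FiniteMeasure ℝ≥0∞} (hμ : Tendsto μs L (𝓝 μ)) (f : C(ℝ≥0∞, ℝ)) :
    Tendsto (fun i => ∫ x, f x ∂(μs i : Measure ℝ≥0∞)) L (𝓝 (∫ x, f x ∂(μ : Measure ℝ≥0∞))) :=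
  FiniteMeasure.tendsto_iff_forall_integral_tendsto.1 hμ (BoundedContinuousFunction.mkOfCompact f)

/-- Joint continuity of the pairing `(f, μ) ↦ ∫ f dμ`, for uniform convergence of `f` and weak
convergence of `μ`. -/
lemma tendsto_integral_joint {ι : Type*} {L : Filter ι} {μs : ι → FiniteMeasure ℝ≥0∞}
    {μ : FiniteMeasure ℝ≥0∞} (hμ : Tendsto μs L (𝓝 μ)) {fs : ι → C(ℝ≥0∞, ℝ)} {f : C(ℝ≥0∞, ℝ)}
    (hf : Tendsto fs L (𝓝 f)) :
    Tendsto (fun i => ∫ x, fs i x ∂(μs i : Measure ℝ≥0∞)) L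
      (𝓝 (∫ x, f x ∂(μ : Measure ℝ≥0∞))) := by
  have hmass : Tendsto (fun i => ((μs i).mass : ℝ)) L (𝓝 (μ.mass : ℝ)) :=
    (NNReal.continuous_coe.tendsto _).comp hμ.mass
  have hnorm : Tendsto (fun i => ‖fs i - f‖) L (𝓝 0) := tendsto_iff_norm_sub_tendsto_zero.1 hf
  have hprod : Tendsto (fun i => ‖fs i - f‖ * ((μs i).mass : ℝ)) L (𝓝 0) := by
    simpa using hnorm.mul hmass
  have hdiff : Tendsto (fun i => ∫ x, fs i x ∂(μs i : Measure ℝ≥0∞)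
      - ∫ x, f x ∂(μs i : Measure ℝ≥0∞)) L (𝓝 0) :=
    squeeze_zero_norm (fun i => abs_integral_sub_le (μs i) (fs i) f) hprod
  simpa using hdiff.add (tendsto_integral_continuousMap hμ f)

/-- `M_f(E)` is first countable: its topology is induced by the total mass and the integrals of a
countable dense family in the separable space `C(E)`. -/
lemma firstCountable_finiteMeasure : FirstCountableTopology (FiniteMeasure ℝ≥0∞) := by
  let D : ℕ → C(ℝ≥0∞, ℝ) := TopologicalSpace.denseSeq C(ℝ≥0∞, ℝ)
  let Φ : FiniteMeasure ℝ≥0∞ → ℝ × (ℕ → ℝ) := fun μ =>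
    ((μ.mass : ℝ), fun k => ∫ x, D k x ∂(μ : Measure ℝ≥0∞))
  have hΦ : Topology.IsInducing Φ := by
    rw [Topology.isInducing_iff_nhds]
    intro μ
    apply le_antisymm
    · refine (tendsto_iff_comap.1 ?_)
      refine Tendsto.prodMk_nhds ?_ (tendsto_pi_nhds.2 fun k => ?_)
      · exact (NNReal.continuous_coe.tendsto _).comp (FiniteMeasure.continuous_mass.tendsto _)
      · exact tendsto_integral_continuousMap tendsto_id (D k)
    · have hL : Tendsto Φ (comap Φ (𝓝 (Φ μ))) (𝓝 (Φ μ)) := tendsto_comap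
      have hmass : Tendsto (fun ν : FiniteMeasure ℝ≥0∞ => (ν.mass : ℝ)) (comap Φ (𝓝 (Φ μ)))
          (𝓝 (μ.mass : ℝ)) := (continuous_fst.tendsto _).comp hL
      have hD : ∀ k, Tendsto (fun ν : FiniteMeasure ℝ≥0∞ => ∫ x, D k x ∂(ν : Measure ℝ≥0∞))
          (comap Φ (𝓝 (Φ μ))) (𝓝 (∫ x, D k x ∂(μ : Measure ℝ≥0∞))) := fun k =>
        (((continuous_apply k).comp continuous_snd).tendsto _).comp hL
      have hid : Tendsto (id : FiniteMeasure ℝ≥0∞ → FiniteMeasure ℝ≥0∞)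
          (comap Φ (𝓝 (Φ μ))) (𝓝 μ) := by
        refine FiniteMeasure.tendsto_of_forall_integral_tendsto fun f => ?_
        rw [Metric.tendsto_nhds]
        intro ε hε
        have hM : (0 : ℝ) < 2 * (μ.mass : ℝ) + 1 := by positivity
        obtain ⟨k, hk⟩ := (TopologicalSpace.denseRange_denseSeq C(ℝ≥0∞, ℝ)).exists_dist_lt
          (f : C(ℝ≥0∞, ℝ)) (ε := ε / 2 / (2 * (μ.mass : ℝ) + 1)) (by positivity)
        have hk' : ‖(f : C(ℝ≥0∞, ℝ)) - D k‖ < ε / 2 / (2 * (μ.mass : ℝ) + 1) := by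
          rwa [dist_eq_norm] at hk
        filter_upwards [hmass.eventually (gt_mem_nhds (lt_add_one (μ.mass : ℝ))),
          (Metric.tendsto_nhds.1 (hD k)) (ε / 2) (by positivity)] with ν hν hνk
        have h1 := abs_integral_sub_le ν (f : C(ℝ≥0∞, ℝ)) (D k)
        have h2 := abs_integral_sub_le μ (f : C(ℝ≥0∞, ℝ)) (D k)
        rw [Real.dist_eq] at hνk ⊢
        have h3 : ‖(f : C(ℝ≥0∞, ℝ)) - D k‖ * (2 * (μ.mass : ℝ) + 1) < ε / 2 :=
          (lt_div_iff₀ hM).1 hk'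
        have h4 : ‖(f : C(ℝ≥0∞, ℝ)) - D k‖ * (ν.mass : ℝ)
            ≤ ‖(f : C(ℝ≥0∞, ℝ)) - D k‖ * ((μ.mass : ℝ) + 1) := by gcongr
        change |∫ x, f x ∂(ν : Measure ℝ≥0∞) - ∫ x, D k x ∂(ν : Measure ℝ≥0∞)| ≤ _ at h1
        change |∫ x, f x ∂(μ : Measure ℝ≥0∞) - ∫ x, D k x ∂(μ : Measure ℝ≥0∞)| ≤ _ at h2
        change |∫ x, f x ∂(ν : Measure ℝ≥0∞) - ∫ x, f x ∂(μ : Measure ℝ≥0∞)| < ε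
        rw [abs_le] at h1 h2
        rw [abs_lt] at hνk ⊢
        constructor <;> nlinarith
      exact hid
  exact hΦ.firstCountableTopology

/-! ### The cut point and the erased measure -/

lemma eraseCut_le {μ : Measure ℝ≥0∞} {a s : ℝ≥0∞} (h : μ univ - a ≤ μ (Iic s)) :
    eraseCut μ a ≤ s :=
  sInf_le h

lemma le_eraseCut {μ : Measure ℝ≥0∞} {a s : ℝ≥0∞} (h : μ (Iic s) < μ univ - a) :
    s ≤ eraseCut μ a :=
  le_sInf fun _ hb => le_of_not_gt fun hlt =>
    absurd (lt_of_le_of_lt (hb.trans (measure_mono (Iic_subset_Iic.2 hlt.le))) h) (lt_irrefl _)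

lemma lt_of_lt_eraseCut {μ : Measure ℝ≥0∞} {a s : ℝ≥0∞} (h : s < eraseCut μ a) :
    μ (Iic s) < μ univ - a :=
  lt_of_not_ge fun hle => absurd (eraseCut_le hle) (not_le.2 h)

lemma eraseCut_antitone (μ : Measure ℝ≥0∞) : Antitone (eraseCut μ) := fun _ _ hab =>
  sInf_le_sInf fun _ hs => (tsub_le_tsub_left hab _).trans hs

lemma measure_Iio_eraseCut_le (μ : Measure ℝ≥0∞) (a : ℝ≥0∞) :
    μ (Iio (eraseCut μ a)) ≤ μ univ - a := by
  rcases eq_or_ne (eraseCut μ a) 0 with h0 | h0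
  · simp [h0]
  · obtain ⟨u, hu, hlt, hlim⟩ := exists_seq_strictMono_tendsto' (pos_iff_ne_zero.2 h0)
    have hU : Iio (eraseCut μ a) = ⋃ n, Iic (u n) := by
      ext x
      simp only [mem_Iio, mem_iUnion, mem_Iic]
      constructor
      · intro hx
        obtain ⟨n, hn⟩ := (hlim.eventually (lt_mem_nhds hx)).exists
        exact ⟨n, hn.le⟩
      · rintro ⟨n, hn⟩
        exact hn.trans_lt (hlt n).2
    have hmono : Monotone fun n => Iic (u n) := fun _ _ h => Iic_subset_Iic.2 (hu.monotone h)
    rw [hU, hmono.measure_iUnion]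
    exact iSup_le fun n => (lt_of_lt_eraseCut (hlt n).2).le

/-- The cut point is the height of the erased measure, also when everything is erased, in which
case both are `0`. -/
lemma mH_eraseMass (μ : Measure ℝ≥0∞) (a : ℝ≥0∞) :
    mH (eraseMass a μ) = eraseCut μ a := by
  apply le_antisymm
  · refine sSup_le fun x hx => le_of_not_gt fun hlt => ?_
    have h := hx (Ioi (eraseCut μ a)) isOpen_Ioi hlt
    have hI : Ioi (eraseCut μ a) ∩ Iio (eraseCut μ a) = ∅ := by
      ext y; simpa using fun h : eraseCut μ a < y => h.le
    simp [eraseMass, Measure.restrict_apply measurableSet_Ioi, hI] at h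
  · rcases eq_or_ne (eraseCut μ a) 0 with h0 | h0
    · simp [h0]
    · refine le_sSup fun U hU hcU => ?_
      have hval : eraseMass a μ U = μ (U ∩ Iio (eraseCut μ a))
          + (μ univ - a - μ (Iio (eraseCut μ a))) := by
        simp [eraseMass, Measure.restrict_apply hU.measurableSet, hcU]
      rw [hval]
      by_contra hpos
      have hzero := add_eq_zero.1 (le_antisymm (not_lt.1 hpos) zero_le)
      obtain ⟨l, hl, hlU⟩ := exists_Ioc_subset_of_mem_nhds (hU.mem_nhds hcU)
        ⟨0, pos_iff_ne_zero.2 h0⟩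
      have hcover : Iio (eraseCut μ a) ⊆ Iic l ∪ (U ∩ Iio (eraseCut μ a)) := fun y hy => by
        rcases le_or_gt y l with h | h
        · exact Or.inl h
        · exact Or.inr ⟨hlU ⟨h, le_of_lt hy⟩, hy⟩
      have h1 : μ (Iio (eraseCut μ a)) ≤ μ (Iic l) :=
        (measure_mono hcover).trans ((measure_union_le _ _).trans (by rw [hzero.1, add_zero]))
      exact absurd ((tsub_eq_zero_iff_le.1 hzero.2).trans h1) (not_le.2 (lt_of_lt_eraseCut hl))

lemma isFiniteMeasure_eraseMass (a : ℝ≥0∞) (μ : Measure ℝ≥0∞) [IsFiniteMeasure μ] :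
    IsFiniteMeasure (eraseMass a μ) := by
  refine ⟨?_⟩
  have h1 : μ univ - a - μ (Iio (eraseCut μ a)) ≤ μ univ := tsub_le_self.trans tsub_le_self
  simpa [eraseMass] using h1.trans_lt (measure_lt_top μ _)

/-- Collapsing all the mass of `μ` beyond the cut point onto it, and then removing the erased mass
from the cut point, produces the erased measure. -/
lemma integral_eraseMass (a : ℝ≥0∞) (μ : FiniteMeasure ℝ≥0∞) (f : C(ℝ≥0∞, ℝ)) :
    ∫ x, f x ∂(eraseMass a (μ : Measure ℝ≥0∞))
      = ∫ x, f (min x (eraseCut μ a)) ∂(μ : Measure ℝ≥0∞)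
        - f (eraseCut μ a) * (min a ((μ : Measure ℝ≥0∞) univ)).toReal := by
  set c := eraseCut μ a with hc
  set m : Measure ℝ≥0∞ := (μ : Measure ℝ≥0∞) with hm
  have hfin : m univ - a - m (Iio c) ≠ ∞ :=
    ((tsub_le_self.trans tsub_le_self).trans_lt (measure_lt_top m univ)).ne
  have hfi : Integrable f m := integrable_of_continuousMap μ f
  have hgi : Integrable (fun x => f (min x c)) m :=
    integrable_of_continuousMap μ ⟨fun x => f (min x c), by fun_prop⟩
  have hdi : Integrable f ((m univ - a - m (Iio c)) • Measure.dirac c) :=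
    (integrable_dirac (by simp)).smul_measure hfin
  have h1 : ∫ x, f x ∂(eraseMass a m)
      = ∫ x in Iio c, f x ∂m + (m univ - a - m (Iio c)).toReal * f c := by
    rw [eraseMass, ← hc, integral_add_measure hfi.restrict hdi, integral_smul_measure,
      integral_dirac, smul_eq_mul]
  have h2 : ∫ x, f (min x c) ∂m = ∫ x in Iio c, f x ∂m + (m (Iio c)ᶜ).toReal * f c := by
    rw [← integral_add_compl measurableSet_Iio hgi]
    congr 1
    · exact setIntegral_congr_fun measurableSet_Iio fun x hx => by
        simp only [min_eq_left (le_of_lt (mem_Iio.1 hx))]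
    · rw [setIntegral_congr_fun (g := fun _ => f c) measurableSet_Iio.compl fun x hx => by
        simp only [compl_Iio, mem_Ici] at hx; simp [min_eq_right hx]]
      simp [Measure.real]
  have hle : m (Iio c) ≤ m univ - a := measure_Iio_eraseCut_le m a
  have h3 : m univ - a = m univ - min a (m univ) := by
    rcases le_total a (m univ) with h | h
    · rw [min_eq_left h]
    · rw [min_eq_right h, tsub_self, tsub_eq_zero_of_le h]
  have h4 : (m univ - a - m (Iio c)).toReal
      = (m univ).toReal - (min a (m univ)).toReal - (m (Iio c)).toReal := by
    rw [ENNReal.toReal_sub_of_le hle (tsub_le_self.trans_lt (measure_lt_top m univ)).ne, h3,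
      ENNReal.toReal_sub_of_le (min_le_right _ _) (measure_ne_top m _)]
  have h5 : (m (Iio c)ᶜ).toReal = (m univ).toReal - (m (Iio c)).toReal := by
    rw [measure_compl measurableSet_Iio (measure_ne_top m _),
      ENNReal.toReal_sub_of_le (measure_mono (subset_univ _)) (measure_ne_top m _)]
  rw [h1, h2, h4, h5]
  ring

/-- The concatenation `[k_a μ, ν]` as an element of `M_f(E)`. -/
def eraseConcat (a : ℝ≥0∞) (μ ν : FiniteMeasure ℝ≥0∞) : FiniteMeasure ℝ≥0∞ :=
  ⟨concatM (eraseMass a μ) ν, by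
    have := isFiniteMeasure_eraseMass a (μ : Measure ℝ≥0∞)
    unfold concatM
    infer_instance⟩

lemma coe_eraseConcat (a : ℝ≥0∞) (μ ν : FiniteMeasure ℝ≥0∞) :
    (eraseConcat a μ ν : Measure ℝ≥0∞) = concatM (eraseMass a μ) ν := rfl

lemma integral_eraseConcat (a : ℝ≥0∞) (μ ν : FiniteMeasure ℝ≥0∞) (f : C(ℝ≥0∞, ℝ)) :
    ∫ x, f x ∂(eraseConcat a μ ν : Measure ℝ≥0∞)
      = ∫ x, f (min x (eraseCut μ a)) ∂(μ : Measure ℝ≥0∞)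
        - f (eraseCut μ a) * (min a ((μ : Measure ℝ≥0∞) univ)).toReal
        + ∫ x, f (eraseCut μ a + x) ∂(ν : Measure ℝ≥0∞) := by
  have := isFiniteMeasure_eraseMass a (μ : Measure ℝ≥0∞)
  have hmeas : Measurable fun x : ℝ≥0∞ => eraseCut (μ : Measure ℝ≥0∞) a + x := by fun_prop
  have h1 : Integrable f (eraseMass a (μ : Measure ℝ≥0∞)) :=
    (BoundedContinuousFunction.mkOfCompact f).integrable _
  have h2 : Integrable f ((ν : Measure ℝ≥0∞).map fun x => eraseCut (μ : Measure ℝ≥0∞) a + x) :=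
    (BoundedContinuousFunction.mkOfCompact f).integrable _
  rw [coe_eraseConcat, concatM, mH_eraseMass, integral_add_measure h1 h2, integral_eraseMass,
    integral_map hmeas.aemeasurable f.continuous.aestronglyMeasurable]

lemma le_mass_eraseConcat (a : ℝ≥0∞) (μ ν : FiniteMeasure ℝ≥0∞) :
    (μ.mass : ℝ≥0∞) - a ≤ ((eraseConcat a μ ν).mass : ℝ≥0∞) := by
  rw [FiniteMeasure.ennreal_mass, FiniteMeasure.ennreal_mass, coe_eraseConcat]
  calc (μ : Measure ℝ≥0∞) univ - a
      ≤ eraseMass a (μ : Measure ℝ≥0∞) univ := by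
        rw [eraseMass, Measure.add_apply, Measure.restrict_apply_univ, Measure.smul_apply,
          measure_univ (μ := Measure.dirac _), smul_eq_mul, mul_one]
        exact le_add_tsub
    _ ≤ concatM (eraseMass a μ) ν univ := by simp [concatM]

/-! ### Continuity of the cut point and of the concatenation -/

lemma eventually_measure_lt_of_isClosed {ι : Type*} {L : Filter ι}
    {μs : ι → FiniteMeasure ℝ≥0∞} {μ : FiniteMeasure ℝ≥0∞} (hμ : Tendsto μs L (𝓝 μ))
    {K : Set ℝ≥0∞} (hK : IsClosed K) {as : ι → ℝ≥0∞} {a : ℝ≥0∞} (ha : Tendsto as L (𝓝 a))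
    (hlt : (μ : Measure ℝ≥0∞) K < a) : ∀ᶠ i in L, (μs i : Measure ℝ≥0∞) K < as i := by
  obtain ⟨b, hb1, hb2⟩ := exists_between hlt
  have h := FiniteMeasure.limsup_measure_closed_le_of_tendsto hμ hK
  filter_upwards [eventually_lt_of_limsup_lt (h.trans_lt hb1), ha.eventually (lt_mem_nhds hb2)]
    with i h1 h2 using h1.trans h2

lemma tendsto_univ {ι : Type*} {L : Filter ι}
    {μs : ι → FiniteMeasure ℝ≥0∞} {μ : FiniteMeasure ℝ≥0∞} (hμ : Tendsto μs L (𝓝 μ)) :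
    Tendsto (fun i => (μs i : Measure ℝ≥0∞) univ) L (𝓝 ((μ : Measure ℝ≥0∞) univ)) := by
  simpa only [← FiniteMeasure.ennreal_mass] using ENNReal.tendsto_coe.2 hμ.mass

/-- The lower bound follows from the portmanteau theorem on `[0, s]` and holds at every `a`; the
upper bound uses the portmanteau theorem on `[s, ∞]` and the continuity of `eraseCut μ` from the
left at `a`, which is why `a = 0` is excluded. -/
lemma tendsto_eraseCut {ι : Type*} {L : Filter ι}
    {μs : ι → FiniteMeasure ℝ≥0∞} {μ : FiniteMeasure ℝ≥0∞} (hμ : Tendsto μs L (𝓝 μ))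
    {as : ι → ℝ≥0∞} {a : ℝ≥0∞} (ha : Tendsto as L (𝓝 a)) (ha0 : a ≠ 0)
    (hcont : ContinuousAt (eraseCut (μ : Measure ℝ≥0∞)) a) :
    Tendsto (fun i => eraseCut (μs i : Measure ℝ≥0∞) (as i)) L
      (𝓝 (eraseCut (μ : Measure ℝ≥0∞) a)) := by
  rw [tendsto_order]
  constructor
  · intro s hs
    obtain ⟨s', hs1, hs2⟩ := exists_between hs
    have hsub : Tendsto (fun i => (μs i : Measure ℝ≥0∞) univ - as i) L
        (𝓝 ((μ : Measure ℝ≥0∞) univ - a)) :=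
      ENNReal.Tendsto.sub (tendsto_univ hμ) ha (Or.inl (measure_ne_top _ _))
    filter_upwards [eventually_measure_lt_of_isClosed hμ isClosed_Iic hsub
      (lt_of_lt_eraseCut hs2)] with i hi using hs1.trans_le (le_eraseCut hi)
  · intro s hs
    obtain ⟨s', hs1, hs2⟩ := exists_between hs
    -- continuity at `a > 0` provides some `a' < a` with a cut point still below `s'`
    obtain ⟨l, hl, hlU⟩ := exists_Ioc_subset_of_mem_nhds (hcont.eventually (gt_mem_nhds hs1))
      ⟨0, pos_iff_ne_zero.2 ha0⟩
    obtain ⟨a', hla, haa⟩ := exists_between hl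
    have hcut : eraseCut (μ : Measure ℝ≥0∞) a' < s' := hlU ⟨hla, haa.le⟩
    obtain ⟨r, hr, hrs⟩ := sInf_lt_iff.1 hcut
    have hIio : (μ : Measure ℝ≥0∞) univ - a' ≤ (μ : Measure ℝ≥0∞) (Iio s') :=
      le_trans hr (measure_mono (Iic_subset_Iio.2 hrs))
    have hIci : (μ : Measure ℝ≥0∞) (Ici s') < a := by
      refine lt_of_le_of_lt ?_ haa
      rw [← compl_Iio, measure_compl measurableSet_Iio (measure_ne_top _ _)]
      exact tsub_le_iff_tsub_le.1 hIio
    filter_upwards [eventually_measure_lt_of_isClosed hμ isClosed_Ici ha hIci] with i hi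
    refine lt_of_le_of_lt (eraseCut_le ?_) hs2
    refine (tsub_le_tsub_left hi.le _).trans ?_
    rw [← compl_Iio, measure_compl measurableSet_Iio (measure_ne_top _ _)]
    refine (tsub_le_iff_tsub_le.1 le_rfl).trans (measure_mono Iio_subset_Iic_self)

lemma tendsto_eraseConcat {ι : Type*} {L : Filter ι}
    {μs : ι → FiniteMeasure ℝ≥0∞} {μ : FiniteMeasure ℝ≥0∞} (hμ : Tendsto μs L (𝓝 μ))
    {νs : ι → FiniteMeasure ℝ≥0∞} {ν : FiniteMeasure ℝ≥0∞} (hν : Tendsto νs L (𝓝 ν))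
    {as : ι → ℝ≥0∞} {a : ℝ≥0∞} (ha : Tendsto as L (𝓝 a))
    (hc : Tendsto (fun i => eraseCut (μs i : Measure ℝ≥0∞) (as i)) L
      (𝓝 (eraseCut (μ : Measure ℝ≥0∞) a))) :
    Tendsto (fun i => eraseConcat (as i) (μs i) (νs i)) L (𝓝 (eraseConcat a μ ν)) := by
  refine FiniteMeasure.tendsto_of_forall_integral_tendsto fun f => ?_
  change Tendsto (fun i => ∫ x, (f : C(ℝ≥0∞, ℝ)) x ∂(eraseConcat (as i) (μs i) (νs i) :
    Measure ℝ≥0∞)) L (𝓝 (∫ x, (f : C(ℝ≥0∞, ℝ)) x ∂(eraseConcat a μ ν : Measure ℝ≥0∞)))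
  simp only [integral_eraseConcat]
  -- currying turns convergence of the cut points into uniform convergence of the integrands
  let G₁ : C(ℝ≥0∞, C(ℝ≥0∞, ℝ)) := ContinuousMap.curry
    ⟨fun p : ℝ≥0∞ × ℝ≥0∞ => f (min p.2 p.1), by fun_prop⟩
  let G₂ : C(ℝ≥0∞, C(ℝ≥0∞, ℝ)) := ContinuousMap.curry
    ⟨fun p : ℝ≥0∞ × ℝ≥0∞ => f (p.1 + p.2), by fun_prop⟩
  have h1 := tendsto_integral_joint hμ ((G₁.continuous.tendsto _).comp hc)
  have h2 := tendsto_integral_joint hν ((G₂.continuous.tendsto _).comp hc)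
  have h3 : Tendsto (fun i => (min (as i) ((μs i : Measure ℝ≥0∞) univ)).toReal) L
      (𝓝 (min a ((μ : Measure ℝ≥0∞) univ)).toReal) :=
    (ENNReal.tendsto_toReal ((min_le_right _ _).trans_lt (measure_lt_top _ _)).ne).comp
      (ha.min (tendsto_univ hμ))
  exact (h1.sub (((f.continuous.tendsto _).comp hc).mul h3)).add h2

lemma tendsto_eraseConcat_const {ν : FiniteMeasure ℝ≥0∞} (a : ℝ≥0∞) (μ : FiniteMeasure ℝ≥0∞) :
    Tendsto (eraseConcat a μ) (𝓝 ν) (𝓝 (eraseConcat a μ ν)) :=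
  tendsto_eraseConcat tendsto_const_nhds tendsto_id tendsto_const_nhds tendsto_const_nhds

/-! ### Almost sure statements and measurability -/

/-- An atomless random variable almost surely avoids `0` and the countably many discontinuities of
the antitone function `eraseCut μ`. -/
lemma ae_good {Ω : Type*} [MeasurableSpace Ω] (P : Measure Ω) (X : Ω → ℝ≥0∞)
    (hX : ∀ x, P {ω | X ω = x} = 0) (μ : Measure ℝ≥0∞) :
    ∀ᵐ ω ∂P, X ω ≠ 0 ∧ ContinuousAt (eraseCut μ) (X ω) := by
  have hS : ({0} ∪ {x | ¬ContinuousAt (eraseCut μ) x}).Countable :=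
    (countable_singleton 0).union (eraseCut_antitone μ).countable_not_continuousAt
  have hnull : P (⋃ x ∈ ({0} ∪ {x | ¬ContinuousAt (eraseCut μ) x}), {ω | X ω = x}) = 0 :=
    (measure_biUnion_null_iff hS).2 fun x _ => hX x
  refine measure_mono_null (fun ω hω => ?_) hnull
  simp only [mem_iUnion]
  refine ⟨X ω, ?_, rfl⟩
  by_contra hmem
  simp only [mem_union, mem_singleton_iff, mem_ofPred_eq, not_or, not_not] at hmem
  exact hω hmem

lemma aestronglyMeasurable_eraseConcat {Ω : Type*} [MeasurableSpace Ω] (P : Measure Ω)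
    (X : Ω → ℝ≥0∞) (hXm : Measurable X) (hX : ∀ x, P {ω | X ω = x} = 0)
    (ρ : Ω → FiniteMeasure ℝ≥0∞)
    (hρ : @Measurable Ω (FiniteMeasure ℝ≥0∞) _ (borel (FiniteMeasure ℝ≥0∞)) ρ)
    (F : FiniteMeasure ℝ≥0∞ → ℝ) (hF : Continuous F) (μ : FiniteMeasure ℝ≥0∞) :
    AEStronglyMeasurable (fun ω => F (eraseConcat (X ω) μ (ρ ω))) P := by
  have hmeas : ∀ a, Measurable fun ω => F (eraseConcat a μ (ρ ω)) := fun a => by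
    have hc : Continuous fun ν => F (eraseConcat a μ ν) :=
      hF.comp (continuous_iff_continuousAt.2 fun ν => tendsto_eraseConcat_const a μ)
    exact hc.borel_measurable.comp hρ
  have happ := hXm.stronglyMeasurable
  refine aestronglyMeasurable_of_tendsto_ae atTop
    (f := fun n ω => F (eraseConcat (happ.approx n ω) μ (ρ ω)))
    (fun n => ((happ.approx n).measurable_bind _ hmeas).aestronglyMeasurable) ?_
  filter_upwards [ae_good P X hX μ] with ω hω
  have ha := happ.tendsto_approx ω
  exact (hF.tendsto _).comp (tendsto_eraseConcat tendsto_const_nhds tendsto_const_nhds ha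
    (tendsto_eraseCut tendsto_const_nhds ha hω.1 hω.2))

/-- Let `I*` be a nonnegative random variable whose law has no atom and `ρ` a
random finite measure on `E = [0,∞]`. If `F` is bounded, continuous for the weak topology on
`M_f(E)` and vanishes along sequences of measures whose total masses tend to infinity, then
`𝓕(μ) = E[F([k_{I*}μ, ρ])]` is continuous for the weak topology and vanishes along sequences
of measures whose total masses tend to infinity. -/
theorem continuity_of_expected_concat
    {Ω : Type*} [MeasurableSpace Ω] (P : Measure Ω) [IsProbabilityMeasure P]
    (Istar : Ω → ℝ) (hInonneg : ∀ ω, 0 ≤ Istar ω) (hImeas : Measurable Istar)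
    (hInoatom : ∀ x : ℝ, P {ω | Istar ω = x} = 0)
    (ρ : Ω → FiniteMeasure ℝ≥0∞)
    (hρ : @Measurable Ω (FiniteMeasure ℝ≥0∞) _ (borel (FiniteMeasure ℝ≥0∞)) ρ)
    (F : Measure ℝ≥0∞ → ℝ)
    (hFbdd : ∃ C, ∀ ν : Measure ℝ≥0∞, |F ν| ≤ C)
    (hFcont : Continuous (fun ν : FiniteMeasure ℝ≥0∞ => F (ν : Measure ℝ≥0∞)))
    (hFvanish : ∀ νs : ℕ → FiniteMeasure ℝ≥0∞,
        Tendsto (fun n => (νs n).mass) atTop atTop →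
        Tendsto (fun n => F ((νs n : Measure ℝ≥0∞))) atTop (𝓝 0))
    (Fcal : Measure ℝ≥0∞ → ℝ)
    (hFcal : ∀ μ : Measure ℝ≥0∞,
        Fcal μ = ∫ ω, F (concatM (eraseMass (ENNReal.ofReal (Istar ω)) μ)
          ((ρ ω : Measure ℝ≥0∞))) ∂P) :
    Continuous (fun μ : FiniteMeasure ℝ≥0∞ => Fcal (μ : Measure ℝ≥0∞)) ∧
    ∀ μs : ℕ → FiniteMeasure ℝ≥0∞,
      Tendsto (fun n => (μs n).mass) atTop atTop →
      Tendsto (fun n => Fcal ((μs n : Measure ℝ≥0∞))) atTop (𝓝 0) := by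
  have := firstCountable_finiteMeasure
  obtain ⟨C, hC⟩ := hFbdd
  let X : Ω → ℝ≥0∞ := fun ω => ENNReal.ofReal (Istar ω)
  have hXm : Measurable X := hImeas.ennreal_ofReal
  have hX : ∀ x, P {ω | X ω = x} = 0 := fun x =>
    measure_mono_null (fun ω hω => by
      change Istar ω = x.toReal
      rw [← (hω : ENNReal.ofReal (Istar ω) = x), ENNReal.toReal_ofReal (hInonneg ω)])
      (hInoatom x.toReal)
  have hmeas : ∀ μ : FiniteMeasure ℝ≥0∞, AEStronglyMeasurable
      (fun ω => F (eraseConcat (X ω) μ (ρ ω) : Measure ℝ≥0∞)) P := fun μ =>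
    aestronglyMeasurable_eraseConcat P X hXm hX ρ hρ
      (fun ν : FiniteMeasure ℝ≥0∞ => F (ν : Measure ℝ≥0∞)) hFcont μ
  have hval : ∀ μ : FiniteMeasure ℝ≥0∞,
      Fcal μ = ∫ ω, F (eraseConcat (X ω) μ (ρ ω) : Measure ℝ≥0∞) ∂P := fun μ => hFcal μ
  simp only [hval]
  constructor
  · refine continuous_iff_continuousAt.2 fun μ => ?_
    refine tendsto_integral_filter_of_dominated_convergence (fun _ => C)
      (Eventually.of_forall hmeas)
      (Eventually.of_forall fun ν => Eventually.of_forall fun ω => hC _)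
      (integrable_const C) ?_
    filter_upwards [ae_good P X hX μ] with ω hω
    exact (hFcont.tendsto _).comp (tendsto_eraseConcat tendsto_id tendsto_const_nhds
      tendsto_const_nhds (tendsto_eraseCut tendsto_id tendsto_const_nhds hω.1 hω.2))
  · intro μs hμs
    have hlim : ∀ ω, Tendsto (fun n => F (eraseConcat (X ω) (μs n) (ρ ω) : Measure ℝ≥0∞))
        atTop (𝓝 0) := fun ω => by
      refine hFvanish _ (tendsto_atTop.2 fun b => ?_)
      filter_upwards [tendsto_atTop.1 hμs (b + (Istar ω).toNNReal)] with n hn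
      have h := le_mass_eraseConcat (X ω) (μs n) (ρ ω)
      have hXe : X ω = ((Istar ω).toNNReal : ℝ≥0∞) := rfl
      rw [hXe, ← ENNReal.coe_sub, ENNReal.coe_le_coe] at h
      exact (le_tsub_of_add_le_right hn).trans h
    simpa using tendsto_integral_of_dominated_convergence (fun _ => C) (fun n => hmeas (μs n))
      (integrable_const C) (fun n => Eventually.of_forall fun ω => hC _)
      (Eventually.of_forall hlim)
end
end
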